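/- Suppose the Markov kernel R satisfies Doeblin's condition: there exist a probability measure μ on S, a real ε > 0 and an integer k ≥ 1 such that R^k(y, B) ≥ ε μ(B) for every y ∈ S and every measurable B ⊆ S. Then R admits a unique invariant probability measure π, and there exist constants ρ > 1 and κ > 0 such that for every n ≥ 1, sup_{ξ ∈ S} ‖R^n(ξ, ·) − π‖_TV ≤ κ ρ^{−n}, where ‖·‖_TV denotes the total variation norm. -/

import Mathlib

open MeasureTheory ProbabilityTheory Filter

noncomputable def iterK {S : Type*} [MeasurableSpace S] (R : S → Measure S) : ℕ → S → Measure S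
  | 0, y => Measure.dirac y
  | n+1, y => (iterK R n y).bind R

noncomputable def tvDist {X : Type*} [MeasurableSpace X] (μ ν : Measure X) : ℝ :=
  ⨆ B : {B : Set X // MeasurableSet B}, |(μ B.1).toReal - (ν B.1).toReal|

lemma iterK_measurable {S : Type*} [MeasurableSpace S] (R : S → Measure S) (hR : Measurable R)
    (n : ℕ) : Measurable (iterK R n) := by
  induction n with
  | zero => exact Measure.measurable_dirac
  | succ n ih => exact (Measure.measurable_bind' hR).comp ih

lemma iterK_prob {S : Type*} [MeasurableSpace S] (R : S → Measure S) (hR : Measurable R)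
    (hp : ∀ y, IsProbabilityMeasure (R y)) (n : ℕ) (y : S) :
    IsProbabilityMeasure (iterK R n y) := by
  induction n with
  | zero => exact Measure.dirac.isProbabilityMeasure
  | succ n ih =>
    constructor
    change (iterK R n y).bind R Set.univ = 1
    rw [Measure.bind_apply MeasurableSet.univ hR.aemeasurable]
    simp

lemma iterK_add {S : Type*} [MeasurableSpace S] (R : S → Measure S) (hR : Measurable R)
    (n m : ℕ) (y : S) : iterK R (n + m) y = (iterK R n y).bind (iterK R m) := by
  induction m with
  | zero => exact Measure.bind_dirac.symm
  | succ m ih =>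
    change (iterK R (n + m) y).bind R = _
    rw [ih, Measure.bind_bind (iterK_measurable R hR m).aemeasurable hR.aemeasurable]
    rfl

lemma bind_real {S : Type*} [MeasurableSpace S] (Q : S → Measure S) (hQ : Measurable Q)
    (hp : ∀ y, IsProbabilityMeasure (Q y)) (ν : Measure S) (B : Set S) (hB : MeasurableSet B) :
    (ν.bind Q).real B = ∫ z, (Q z).real B ∂ν := by
  rw [Measure.real, Measure.bind_apply hB hQ.aemeasurable]
  exact (integral_toReal ((Measure.measurable_coe hB).comp hQ).aemeasurable
    (ae_of_all _ fun z => measure_lt_top _ _)).symm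

lemma real_meas {S : Type*} [MeasurableSpace S] (Q : S → Measure S) (hQ : Measurable Q)
    (B : Set S) (hB : MeasurableSet B) : Measurable fun z => (Q z).real B :=
  ((Measure.measurable_coe hB).comp hQ).ennreal_toReal

lemma real_integrable {S : Type*} [MeasurableSpace S] (Q : S → Measure S) (hQ : Measurable Q)
    (hp : ∀ y, IsProbabilityMeasure (Q y)) (ν : Measure S) [IsFiniteMeasure ν]
    (B : Set S) (hB : MeasurableSet B) : Integrable (fun z => (Q z).real B) ν := by
  refine Integrable.of_bound (real_meas Q hQ B hB).aestronglyMeasurable 1 (ae_of_all _ fun z => ?_)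
  rw [Real.norm_of_nonneg measureReal_nonneg]
  exact measureReal_le_one

lemma bind_mem {S : Type*} [MeasurableSpace S] (Q : S → Measure S) (hQ : Measurable Q)
    (hp : ∀ y, IsProbabilityMeasure (Q y)) (ν : Measure S) [IsProbabilityMeasure ν]
    (B : Set S) (hB : MeasurableSet B) (c d : ℝ) (h : ∀ y, c ≤ (Q y).real B ∧ (Q y).real B ≤ d) :
    c ≤ (ν.bind Q).real B ∧ (ν.bind Q).real B ≤ d := by
  rw [bind_real Q hQ hp ν B hB]
  have hi := real_integrable Q hQ hp ν B hB
  constructor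
  · have := integral_mono (integrable_const c) hi (fun y => (h y).1)
    simpa using this
  · have := integral_mono hi (integrable_const d) (fun y => (h y).2)
    simpa using this

lemma osc {S : Type*} [MeasurableSpace S] (R : S → Measure S) (hR : Measurable R)
    (hp : ∀ y, IsProbabilityMeasure (R y)) (μ : Measure S) [IsProbabilityMeasure μ]
    (ε : ℝ) (hε : 0 < ε) (k : ℕ)
    (hD : ∀ y : S, ENNReal.ofReal ε • μ ≤ iterK R k y)
    (B : Set S) (hB : MeasurableSet B) (r j : ℕ) :
    ∃ c, ∀ y, c ≤ (iterK R (k * j + r) y).real B ∧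
      (iterK R (k * j + r) y).real B ≤ c + (1 - ε) ^ j := by
  have hP := iterK_prob R hR hp
  induction j with
  | zero =>
    refine ⟨0, fun y => ⟨measureReal_nonneg, ?_⟩⟩
    have := hP (k * 0 + r) y
    simpa using (measureReal_le_one (μ := iterK R (k * 0 + r) y) (s := B))
  | succ j ih =>
    obtain ⟨c, hc⟩ := ih
    set n := k * j + r
    set f : S → ℝ := fun z => (iterK R n z).real B
    have hM := iterK_measurable R hR n
    have key : ∀ y, ∀ h : S → ℝ, (∀ z, 0 ≤ h z) → Integrable h (iterK R k y) →
        ε * ∫ z, h z ∂μ ≤ ∫ z, h z ∂(iterK R k y) := by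
      intro y h h0 hi
      have := integral_mono_measure (hD y) (ae_of_all _ h0) hi
      rwa [integral_smul_measure, ENNReal.toReal_ofReal hε.le, smul_eq_mul] at this
    have hfi : ∀ (ν : Measure S) [IsFiniteMeasure ν], Integrable f ν := fun ν _ =>
      real_integrable _ hM (hP n) ν B hB
    refine ⟨c + ε * (∫ z, f z ∂μ - c), fun y => ?_⟩
    have := hP k y
    have e : k * (j + 1) + r = k + n := by simp only [n]; ring
    rw [e, iterK_add R hR, bind_real _ hM (hP n) _ B hB]
    change _ ≤ ∫ z, f z ∂_ ∧ ∫ z, f z ∂_ ≤ _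
    have h1 := key y (fun z => f z - c) (fun z => sub_nonneg.2 (hc z).1)
      ((hfi _).sub (integrable_const c))
    have h2 := key y (fun z => (c + (1 - ε) ^ j) - f z) (fun z => sub_nonneg.2 (hc z).2)
      ((integrable_const _).sub (hfi _))
    rw [integral_sub (hfi _) (integrable_const _), integral_sub (hfi _) (integrable_const _)] at h1
    rw [integral_sub (integrable_const _) (hfi _), integral_sub (integrable_const _) (hfi _)] at h2
    simp only [integral_const, probReal_univ, one_smul] at h1 h2
    constructor
    · linarith
    · rw [pow_succ]; linarith

/-- A uniform limit (over measurable sets) of probability measures is a probability measure. -/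
lemma limit_measure {S : Type*} [MeasurableSpace S] (m : ℕ → Measure S)
    (hm : ∀ n, IsProbabilityMeasure (m n)) (p : Set S → ℝ) (w : ℕ → ℝ)
    (hw : Tendsto w atTop (nhds 0))
    (hp : ∀ n B, MeasurableSet B → |(m n).real B - p B| ≤ w n) :
    ∃ π : Measure S, IsProbabilityMeasure π ∧ ∀ B, MeasurableSet B → π.real B = p B := by
  have ht : ∀ B, MeasurableSet B → Tendsto (fun n => (m n).real B) atTop (nhds (p B)) := by
    intro B hB
    rw [tendsto_iff_dist_tendsto_zero]
    exact squeeze_zero (fun _ => dist_nonneg) (fun n => by simpa [Real.dist_eq] using hp n B hB) hw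
  have h0 : ∀ B, MeasurableSet B → 0 ≤ p B := fun B hB =>
    ge_of_tendsto' (ht B hB) fun n => measureReal_nonneg
  have hempty : p ∅ = 0 := by
    have := ht ∅ MeasurableSet.empty
    simp only [measureReal_empty] at this
    exact tendsto_nhds_unique this tendsto_const_nhds
  have huniv : p Set.univ = 1 := by
    have := ht Set.univ MeasurableSet.univ
    simp only [probReal_univ] at this
    exact tendsto_nhds_unique this tendsto_const_nhds
  have hsum : ∀ (f : ℕ → Set S), (∀ i, MeasurableSet (f i)) → Pairwise (Function.onFun Disjoint f) →
      HasSum (fun i => p (f i)) (p (⋃ i, f i)) := by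
    intro f hf hd
    have hU : MeasurableSet (⋃ i, f i) := MeasurableSet.iUnion hf
    have hfin : ∀ n (s : Finset ℕ), (m n).real (⋃ i ∈ s, f i) = ∑ i ∈ s, (m n).real (f i) := by
      intro n s
      exact measureReal_biUnion_finset (fun i _ j _ hij => hd hij) (fun i _ => hf i)
    have hfinp : ∀ (s : Finset ℕ), p (⋃ i ∈ s, f i) = ∑ i ∈ s, p (f i) := by
      intro s
      have a := ht (⋃ i ∈ s, f i) (s.measurableSet_biUnion fun i _ => hf i)
      simp only [hfin] at a
      exact tendsto_nhds_unique a (tendsto_finsetSum _ fun i _ => ht _ (hf i))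
    have hms : ∀ n, HasSum (fun i => (m n).real (f i)) ((m n).real (⋃ i, f i)) := by
      intro n
      have h1 : HasSum (fun i => (m n) (f i)) ((m n) (⋃ i, f i)) := by
        rw [measure_iUnion hd hf]; exact ENNReal.summable.hasSum
      have h2 : ∑' i, (m n) (f i) ≠ ⊤ := by
        rw [← measure_iUnion hd hf]; exact measure_ne_top _ _
      have := ENNReal.hasSum_toReal h2
      rw [← ENNReal.tsum_toReal_eq (fun i => measure_ne_top _ _), ← measure_iUnion hd hf] at this
      exact this
    rw [HasSum, SummationFilter.unconditional_filter, Metric.tendsto_nhds]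
    intro δ hδ
    obtain ⟨n, hn⟩ := (hw.eventually (gt_mem_nhds (show (0:ℝ) < δ / 3 by positivity))).exists
    have hs := hms n
    rw [HasSum, SummationFilter.unconditional_filter, Metric.tendsto_nhds] at hs
    filter_upwards [hs (δ / 3) (by positivity)] with s hs
    rw [← hfinp]
    rw [← hfin] at hs
    have h1 := hp n (⋃ i ∈ s, f i) (s.measurableSet_biUnion fun i _ => hf i)
    have h2 := hp n (⋃ i, f i) hU
    rw [Real.dist_eq] at hs ⊢
    rw [abs_le] at h1 h2
    rw [abs_lt] at hs ⊢
    constructor <;> linarith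
  let π : Measure S := Measure.ofMeasurable (fun B _ => ENNReal.ofReal (p B)) (by simp [hempty])
    (by
      intro f hf hd
      have := hsum f hf hd
      rw [← ENNReal.ofReal_tsum_of_nonneg (fun i => h0 _ (hf i)) this.summable, this.tsum_eq])
  have hπ : ∀ B, MeasurableSet B → π B = ENNReal.ofReal (p B) := fun B hB =>
    Measure.ofMeasurable_apply B hB
  refine ⟨π, ⟨by rw [hπ _ MeasurableSet.univ, huniv]; simp⟩, fun B hB => ?_⟩
  rw [Measure.real, hπ B hB, ENNReal.toReal_ofReal (h0 B hB)]

lemma setwise_lintegral {S : Type*} [MeasurableSpace S] (m : ℕ → Measure S) (π : Measure S)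
    (hm : ∀ n, IsProbabilityMeasure (m n)) (hπ : IsProbabilityMeasure π)
    (h : ∀ B, MeasurableSet B → Tendsto (fun n => (m n).real B) atTop (nhds (π.real B)))
    (f : S → ℝ) (hf : Measurable f) (h0 : ∀ x, 0 ≤ f x) (h1 : ∀ x, f x ≤ 1) :
    Tendsto (fun n => ∫ x, f x ∂(m n)) atTop (nhds (∫ x, f x ∂π)) := by
  have hi : ∀ (ν : Measure S) [IsProbabilityMeasure ν], Integrable f ν := fun ν _ =>
    Integrable.of_bound hf.aestronglyMeasurable 1
      (ae_of_all _ fun z => by rw [Real.norm_of_nonneg (h0 z)]; exact h1 z)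
  have lc : ∀ (ν : Measure S) [IsProbabilityMeasure ν],
      ∫ x, f x ∂ν = ∫ t in Set.Ioc (0:ℝ) 1, ν.real {a | t < f a} := by
    intro ν _
    rw [(hi ν).integral_eq_integral_meas_lt (ae_of_all _ h0)]
    refine setIntegral_eq_of_subset_of_forall_sdiff_eq_zero measurableSet_Ioi
      (fun t ht => ht.1) ?_
    rintro t ⟨ht, ht'⟩
    have : 1 < t := by
      by_contra hh
      exact ht' ⟨ht, not_lt.1 hh⟩
    have : {a | t < f a} = ∅ := by
      ext a; simp; linarith [h1 a]
    rw [this]; simp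
  rw [lc π]
  simp only [lc]
  refine tendsto_integral_of_dominated_convergence (fun _ => 1) ?_ (integrable_const _) ?_ ?_
  · intro n
    have : Antitone fun t : ℝ => (m n).real {a | t < f a} := fun s t hst =>
      measureReal_mono (fun a (ha : t < f a) => lt_of_le_of_lt hst ha)
    exact this.measurable.aestronglyMeasurable
  · intro n
    refine ae_of_all _ fun t => ?_
    rw [Real.norm_of_nonneg measureReal_nonneg]
    exact measureReal_le_one
  · exact ae_of_all _ fun t => h _ (measurableSet_lt measurable_const hf)

theorem stmt7 {S : Type*} [MeasurableSpace S]
    (R : S → Measure S) (hRprob : ∀ y, IsProbabilityMeasure (R y))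
    (hRkermeas : ∀ B : Set S, MeasurableSet B → Measurable fun y => R y B)
    (μ : Measure S) (hμprob : IsProbabilityMeasure μ)
    (ε : ℝ) (hε : 0 < ε) (k : ℕ) (hk : 1 ≤ k)
    (hDoeblin : ∀ y : S, ∀ B : Set S, MeasurableSet B → ENNReal.ofReal ε * μ B ≤ iterK R k y B) :
    ∃ π : Measure S, IsProbabilityMeasure π ∧
      (∀ B : Set S, MeasurableSet B → π B = ∫⁻ y, R y B ∂π) ∧
      (∀ π' : Measure S, IsProbabilityMeasure π' →
        (∀ B : Set S, MeasurableSet B → π' B = ∫⁻ y, R y B ∂π') → π' = π) ∧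
      ∃ ρ : ℝ, 1 < ρ ∧ ∃ κ : ℝ, 0 < κ ∧ ∀ n : ℕ, 1 ≤ n → ∀ ξ : S,
        tvDist (iterK R n ξ) π ≤ κ * ρ ^ (-(n:ℝ)) := by
  have hR : Measurable R := Measure.measurable_of_measurable_coe _ hRkermeas
  have hP := iterK_prob R hR hRprob
  have hM := iterK_measurable R hR
  obtain ⟨x0⟩ : Nonempty S := nonempty_of_isProbabilityMeasure μ
  obtain ⟨η, hη0, hη1, hηε⟩ : ∃ η : ℝ, 0 < η ∧ η < 1 ∧ η ≤ ε :=
    ⟨min ε (1/2), by positivity, lt_of_le_of_lt (min_le_right _ _) (by norm_num), min_le_left _ _⟩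
  have hD : ∀ y : S, ENNReal.ofReal η • μ ≤ iterK R k y := by
    intro y
    refine Measure.le_iff.2 fun B hB => ?_
    rw [Measure.smul_apply, smul_eq_mul]
    exact le_trans (by gcongr) (hDoeblin y B hB)
  set q := 1 - η with hq
  have hq0 : 0 < q := by linarith
  have hq1 : q < 1 := by linarith
  set w : ℕ → ℝ := fun n => q ^ (n / k) with hwdef
  have hw : Tendsto w atTop (nhds 0) :=
    (tendsto_pow_atTop_nhds_zero_of_lt_one hq0.le hq1).comp
      (Nat.tendsto_div_const_atTop (by omega))
  have hosc : ∀ B, MeasurableSet B → ∀ n, ∃ c, ∀ y, c ≤ (iterK R n y).real B ∧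
      (iterK R n y).real B ≤ c + w n := by
    intro B hB n
    have := osc R hR hRprob μ η hη0 k hD B hB (n % k) (n / k)
    rwa [Nat.div_add_mod] at this
  choose! c hc using hosc
  have hlater : ∀ B, MeasurableSet B → ∀ n l, n ≤ l → ∀ y, c B n ≤ (iterK R l y).real B ∧
      (iterK R l y).real B ≤ c B n + w n := by
    intro B hB n l hl y
    obtain ⟨m, rfl⟩ := Nat.exists_eq_add_of_le' hl
    rw [iterK_add R hR]
    have := hP m y
    exact bind_mem _ (hM n) (hP n) _ B hB _ _ (hc B hB n)
  have hlim : ∀ B, MeasurableSet B → ∃ a, Tendsto (fun n => (iterK R n x0).real B) atTop (nhds a) := by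
    intro B hB
    apply cauchySeq_tendsto_of_complete
    refine cauchySeq_of_le_tendsto_0 w (fun n m N hn hm => ?_) hw
    have a := hlater B hB N n hn x0
    have b := hlater B hB N m hm x0
    rw [Real.dist_eq, abs_le]
    constructor <;> linarith
  choose! p hp using hlim
  have hpb : ∀ n y B, MeasurableSet B → |(iterK R n y).real B - p B| ≤ w n := by
    intro n y B hB
    have h1 : c B n ≤ p B := ge_of_tendsto (hp B hB)
      (eventually_atTop.2 ⟨n, fun l hl => (hlater B hB n l hl x0).1⟩)
    have h2 : p B ≤ c B n + w n := le_of_tendsto (hp B hB)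
      (eventually_atTop.2 ⟨n, fun l hl => (hlater B hB n l hl x0).2⟩)
    have a := hc B hB n y
    rw [abs_le]
    constructor <;> linarith
  obtain ⟨π, hπp, hπ⟩ := limit_measure (fun n => iterK R n x0) (fun n => hP n x0) p w hw
    (fun n B hB => hpb n x0 B hB)
  refine ⟨π, hπp, ?_, ?_, ?_⟩
  · intro B hB
    have hb : (π.bind R).real B = π.real B := by
      rw [bind_real R hR hRprob π B hB]
      have h1 := setwise_lintegral (fun n => iterK R n x0) π (fun n => hP n x0) hπp
        (fun B hB => by rw [hπ B hB]; exact hp B hB) (fun z => (R z).real B) (real_meas R hR B hB)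
        (fun _ => measureReal_nonneg) (fun _ => measureReal_le_one)
      have h2 := (tendsto_add_atTop_iff_nat 1).2 (hp B hB)
      rw [hπ B hB]
      refine tendsto_nhds_unique h1 (h2.congr fun n => ?_)
      exact bind_real R hR hRprob _ B hB
    rw [← Measure.bind_apply hB hR.aemeasurable]
    have : IsProbabilityMeasure (π.bind R) := ⟨by
      rw [Measure.bind_apply MeasurableSet.univ hR.aemeasurable]; simp⟩
    exact ((measureReal_eq_measureReal_iff (measure_ne_top _ _) (measure_ne_top _ _)).1 hb).symm
  · intro π' hπ'p hinv
    have hb : π'.bind R = π' := by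
      ext B hB
      rw [Measure.bind_apply hB hR.aemeasurable, ← hinv B hB]
    have hbn : ∀ n, π'.bind (iterK R n) = π' := by
      intro n
      induction n with
      | zero => exact Measure.bind_dirac
      | succ n ih =>
        calc π'.bind (iterK R (n+1)) = (π'.bind (iterK R n)).bind R :=
              (Measure.bind_bind (hM n).aemeasurable hR.aemeasurable).symm
          _ = π' := by rw [ih, hb]
    ext B hB
    refine (measureReal_eq_measureReal_iff (measure_ne_top _ _) (measure_ne_top _ _)).1 ?_
    rw [hπ B hB]
    have h3 : ∀ n, |π'.real B - p B| ≤ w n := by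
      intro n
      have := bind_mem _ (hM n) (hP n) π' B hB (p B - w n) (p B + w n) (fun y => by
        have := abs_le.1 (hpb n y B hB)
        constructor <;> linarith)
      rw [hbn n] at this
      rw [abs_le]
      constructor <;> linarith
    have h4 : |π'.real B - p B| ≤ 0 := ge_of_tendsto' hw h3
    exact sub_eq_zero.1 (abs_eq_zero.1 (le_antisymm h4 (abs_nonneg _)))
  · have hk0 : (0:ℝ) < k := by exact_mod_cast hk
    refine ⟨q ^ (-(1 / (k:ℝ))), ?_, q⁻¹, by positivity, ?_⟩
    · exact Real.one_lt_rpow_of_pos_of_lt_one_of_neg hq0 hq1 (by simpa using Nat.lt_of_lt_of_le Nat.zero_lt_one hk)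
    · intro n _ ξ
      have hfin : w n ≤ q⁻¹ * (q ^ (-(1 / (k:ℝ)))) ^ (-(n:ℝ)) := by
        rw [← Real.rpow_mul hq0.le, ← Real.rpow_neg_one, ← Real.rpow_add hq0, hwdef]
        simp only
        rw [← Real.rpow_natCast]
        apply Real.rpow_le_rpow_of_exponent_ge hq0 hq1.le
        have h5 : (n:ℝ) ≤ k * ((n / k : ℕ) + 1) := by
          exact_mod_cast (Nat.lt_mul_div_succ n (by omega : 0 < k)).le
        have h6 : (n:ℝ) / k ≤ (n / k : ℕ) + 1 := by
          rw [div_le_iff₀ hk0]; linarith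
        have h7 : -(1 / (k:ℝ)) * -(n:ℝ) = n / k := by ring
        rw [h7]; linarith
      refine le_trans ?_ hfin
      have : Nonempty {B : Set S // MeasurableSet B} := ⟨⟨∅, MeasurableSet.empty⟩⟩
      refine ciSup_le fun B => ?_
      have := hpb n ξ B.1 B.2
      rw [← hπ B.1 B.2] at this
      exact this
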